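/- Let X be a real Banach space, x₀ ∈ X, and let Ω ⊊ X be a domain which is starlike with respect to x₀. Then for every r > 0 both the j-ball B_j(x₀,r) and the quasihyperbolic ball B_k(x₀,r) of Ω are starlike with respect to x₀. -/

import Mathlib

open Set Metric MeasureTheory

noncomputable section

variable {E : Type*} [NormedAddCommGroup E] [NormedSpace ℝ E]

/-- The quasihyperbolic length of a path `γ` (parametrized on `[0,1]`) in the
domain `Ω`: the integral of `‖γ'(t)‖ / d(γ(t), ∂Ω)`. -/
def qhLength (Ω : Set E) (γ : ℝ → E) : ℝ :=
  ∫ t in (0:ℝ)..1, ‖deriv γ t‖ / infDist (γ t) (frontier Ω)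

/-- A rectifiable curve in `Ω` joining `x` and `y`, formalized as a map on `[0,1]`
which is Lipschitz on `[0,1]` (every rectifiable curve admits such a
parametrization), takes values in `Ω`, and joins `x` to `y`. -/
def IsRectPath (Ω : Set E) (x y : E) (γ : ℝ → E) : Prop :=
  (∃ K : NNReal, LipschitzOnWith K γ (Icc 0 1)) ∧
    MapsTo γ (Icc 0 1) Ω ∧ γ 0 = x ∧ γ 1 = y

/-- The quasihyperbolic metric on `Ω`. -/
def qhDist (Ω : Set E) (x y : E) : ℝ :=
  sInf (qhLength Ω '' {γ | IsRectPath Ω x y γ})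

/-- The quasihyperbolic ball. -/
def qhBall (Ω : Set E) (x : E) (r : ℝ) : Set E :=
  {y ∈ Ω | qhDist Ω x y < r}

/-- The distance ratio metric (`j`-metric) on `Ω`. -/
def jDist (Ω : Set E) (x y : E) : ℝ :=
  Real.log (1 + dist x y / min (infDist x (frontier Ω)) (infDist y (frontier Ω)))

/-- The `j`-metric ball. -/
def jBall (Ω : Set E) (x : E) (r : ℝ) : Set E :=
  {y ∈ Ω | jDist Ω x y < r}

/-- `G` is strictly starlike with respect to `x`: it is starlike with respect to `x`
and every half-line emanating from `x` meets `∂G` at exactly one point. -/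
def StrictlyStarlike (G : Set E) (x : E) : Prop :=
  StarConvex ℝ x G ∧
    ∀ v : E, v ≠ 0 → ∃! p : E, p ∈ frontier G ∧ ∃ t : ℝ, 0 < t ∧ p = x + t • v

/-- `G` is strictly convex: it is strictly starlike with respect to each of its points. -/
def StrictlyConvexSet (G : Set E) : Prop :=
  ∀ x ∈ G, StrictlyStarlike G x

/-- A half-line: `{t • v + z : t > 0}` or `{t • v + z : t ≥ 0}` with `v ≠ 0`. -/
def IsHalfline (L : Set E) : Prop :=
  ∃ z v : E, v ≠ 0 ∧
    (L = {p | ∃ t : ℝ, 0 < t ∧ p = t • v + z} ∨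
      L = {p | ∃ t : ℝ, 0 ≤ t ∧ p = t • v + z})

/-- `G` is close-to-convex: its complement can be covered with pairwise
non-intersecting half-lines. -/
def CloseToConvex (G : Set E) : Prop :=
  ∃ 𝒮 : Set (Set E), (∀ L ∈ 𝒮, IsHalfline L) ∧ 𝒮.PairwiseDisjoint id ∧ Gᶜ = ⋃₀ 𝒮

end

section helpers
variable {E : Type*} [NormedAddCommGroup E] [NormedSpace ℝ E]

theorem aux_frontier_ne {Ω : Set E} (hproper : Ω ≠ univ) {x₀ : E} (hx₀ : x₀ ∈ Ω) :
    (frontier Ω).Nonempty :=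
  nonempty_frontier_iff.2 ⟨⟨x₀, hx₀⟩, hproper⟩

theorem aux_pos {Ω : Set E} (hopen : IsOpen Ω) (hne : (frontier Ω).Nonempty) {z : E}
    (hz : z ∈ Ω) : 0 < infDist z (frontier Ω) := by
  refine (isClosed_frontier.notMem_iff_infDist_pos hne).1 ?_
  intro h
  rw [hopen.frontier_eq] at h
  exact h.2 hz

theorem aux_ball {Ω : Set E} {z : E} (hz : z ∈ Ω) {w : E}
    (hw : dist w z < infDist z (frontier Ω)) : w ∈ Ω := by
  by_contra hn
  have hpos : 0 < infDist z (frontier Ω) := lt_of_le_of_lt dist_nonneg hw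
  have hpre : IsPreconnected (ball z (infDist z (frontier Ω))) :=
    (convex_ball z _).isPreconnected
  have hdis : ∀ p ∈ ball z (infDist z (frontier Ω)), p ∉ frontier Ω := by
    intro p hp hpf
    have := infDist_le_dist_of_mem (x := z) hpf
    rw [mem_ball, dist_comm] at hp
    linarith
  have hwb : w ∈ ball z (infDist z (frontier Ω)) := hw
  have hzb := mem_ball_self (x := z) hpos
  obtain ⟨p, hp, hp1, hp2⟩ := hpre (interior Ω) (closure Ω)ᶜ isOpen_interior
    isClosed_closure.isOpen_compl
    (fun p hp => by
      by_contra hc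
      rw [mem_union, not_or, mem_compl_iff, not_not] at hc
      exact hdis p hp ⟨hc.2, hc.1⟩)
    ⟨z, hzb, by
      by_contra hc
      exact hdis z hzb ⟨subset_closure hz, hc⟩⟩
    ⟨w, hwb, fun hc => hdis w hwb ⟨hc, fun hi => hn (interior_subset hi)⟩⟩
  exact hp2 (subset_closure (interior_subset hp1))

theorem aux_star {Ω : Set E} {x₀ : E} (hstar : StarConvex ℝ x₀ Ω) {z : E} (hz : z ∈ Ω)
    {s : ℝ} (h0 : 0 ≤ s) (h1 : s ≤ 1) : x₀ + s • (z - x₀) ∈ Ω :=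
  hstar.add_smul_sub_mem hz h0 h1

theorem aux_scale {Ω : Set E} (hopen : IsOpen Ω) (hne : (frontier Ω).Nonempty) {x₀ : E}
    (hstar : StarConvex ℝ x₀ Ω) {z : E} (hz : z ∈ Ω)
    {s : ℝ} (h0 : 0 ≤ s) (h1 : s ≤ 1) :
    s * infDist z (frontier Ω) ≤ infDist (x₀ + s • (z - x₀)) (frontier Ω) := by
  rcases h0.eq_or_lt with rfl | hs
  · simpa using infDist_nonneg
  refine (le_infDist hne).2 fun p hp => ?_
  by_contra! hlt
  have hw : x₀ + s⁻¹ • (p - x₀) ∈ Ω := by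
    apply aux_ball hz
    have e : x₀ + s • (z - x₀) - p = (-s) • (x₀ + s⁻¹ • (p - x₀) - z) := by
      simp only [smul_sub, smul_add, smul_smul, neg_smul, neg_mul, mul_inv_cancel₀ hs.ne', one_smul]
      abel
    rw [dist_eq_norm, e, norm_smul, norm_neg, Real.norm_of_nonneg h0] at hlt
    rw [dist_eq_norm]
    exact lt_of_mul_lt_mul_left hlt h0
  have hp' := aux_star hstar hw h0 h1
  rw [add_sub_cancel_left, smul_smul, mul_inv_cancel₀ hs.ne', one_smul, add_sub_cancel] at hp'
  rw [hopen.frontier_eq] at hp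
  exact hp.2 hp'

theorem aux_integrable [CompleteSpace E] {Ω : Set E} (hopen : IsOpen Ω)
    (hne : (frontier Ω).Nonempty) {x y : E} {γ : ℝ → E} (hγ : IsRectPath Ω x y γ) :
    IntervalIntegrable (fun t => ‖deriv γ t‖ / infDist (γ t) (frontier Ω)) volume 0 1 := by
  obtain ⟨⟨K, hK⟩, hm, -, -⟩ := hγ
  have hc : ContinuousOn (fun t => (infDist (γ t) (frontier Ω))⁻¹) (Icc (0:ℝ) 1) :=
    ((continuous_infDist_pt _).comp_continuousOn hK.continuousOn).inv₀
      fun t ht => (aux_pos hopen hne (hm ht)).ne'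
  have hd : IntervalIntegrable (fun t => ‖deriv γ t‖) volume 0 1 := by
    rw [intervalIntegrable_iff_integrableOn_Ioo_of_le zero_le_one]
    borelize E
    refine Measure.integrableOn_of_bounded (M := K) (by simp) 
      (measurable_deriv γ).norm.aestronglyMeasurable ?_
    refine (ae_restrict_iff' measurableSet_Ioo).2 (Filter.Eventually.of_forall fun t ht => ?_)
    rw [norm_norm]
    exact norm_deriv_le_of_lipschitzOn (Icc_mem_nhds ht.1 ht.2) hK
  simp only [div_eq_mul_inv]
  exact hd.mul_continuousOn (by rwa [uIcc_of_le zero_le_one])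

theorem aux_path {Ω : Set E} {x₀ : E} (hstar : StarConvex ℝ x₀ Ω) {y : E} {γ : ℝ → E}
    (hγ : IsRectPath Ω x₀ y γ) {s : ℝ} (h0 : 0 ≤ s) (h1 : s ≤ 1) :
    IsRectPath Ω x₀ (x₀ + s • (y - x₀)) (fun t => x₀ + s • (γ t - x₀)) := by
  obtain ⟨⟨K, hK⟩, hm, ha, hb⟩ := hγ
  refine ⟨⟨K, ?_⟩, fun t ht => aux_star hstar (hm ht) h0 h1, by simp [ha], by simp [hb]⟩
  refine LipschitzOnWith.of_dist_le_mul fun t ht u hu => ?_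
  have h := hK.dist_le_mul t ht u hu
  have e : x₀ + s • (γ t - x₀) - (x₀ + s • (γ u - x₀)) = s • (γ t - γ u) := by
    simp only [smul_sub]; abel
  rw [dist_eq_norm, e, norm_smul, Real.norm_of_nonneg h0, ← dist_eq_norm]
  exact (mul_le_of_le_one_left dist_nonneg h1).trans h

theorem aux_length [CompleteSpace E] {Ω : Set E} (hopen : IsOpen Ω)
    (hne : (frontier Ω).Nonempty) {x₀ : E} (hstar : StarConvex ℝ x₀ Ω) {y : E} {γ : ℝ → E}
    (hγ : IsRectPath Ω x₀ y γ) {s : ℝ} (h0 : 0 ≤ s) (h1 : s ≤ 1) :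
    qhLength Ω (fun t => x₀ + s • (γ t - x₀)) ≤ qhLength Ω γ := by
  unfold qhLength
  refine intervalIntegral.integral_mono_on zero_le_one
    (aux_integrable hopen hne (aux_path hstar hγ h0 h1)) (aux_integrable hopen hne hγ) ?_
  intro t ht
  have hm := hγ.2.1 ht
  have e : deriv (fun t => x₀ + s • (γ t - x₀)) t = s • deriv γ t := by
    rw [deriv_const_add, deriv_fun_const_smul_field, deriv_sub_const]
  rw [e, norm_smul, Real.norm_of_nonneg h0,
    div_le_div_iff₀ (aux_pos hopen hne (aux_star hstar hm h0 h1)) (aux_pos hopen hne hm)]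
  have := mul_le_mul_of_nonneg_left (aux_scale hopen hne hstar hm h0 h1) (norm_nonneg (deriv γ t))
  linarith

theorem aux_segment {Ω : Set E} {x₀ : E} (hstar : StarConvex ℝ x₀ Ω) {y : E} (hy : y ∈ Ω) :
    IsRectPath Ω x₀ y (fun t => x₀ + t • (y - x₀)) := by
  refine ⟨⟨‖y - x₀‖₊, ?_⟩, fun t ht => aux_star hstar hy ht.1 ht.2, by simp, by simp⟩
  refine LipschitzOnWith.of_dist_le_mul fun t ht u hu => ?_
  rw [dist_add_left, dist_eq_norm, ← sub_smul, norm_smul, mul_comm, Real.dist_eq, coe_nnnorm,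
    Real.norm_eq_abs]

theorem aux_bdd {Ω : Set E} (x y : E) :
    BddBelow (qhLength Ω '' {γ | IsRectPath Ω x y γ}) := by
  refine ⟨0, ?_⟩
  rintro _ ⟨γ, -, rfl⟩
  exact intervalIntegral.integral_nonneg zero_le_one
    fun t _ => div_nonneg (norm_nonneg _) infDist_nonneg

end helpers

/-- in a domain of a real Banach space which is starlike with respect to
`x₀`, all `j`-balls and quasihyperbolic balls centered at `x₀` are starlike with
respect to `x₀`. -/
theorem qh_and_j_balls_starlike_banach (X : Type*) [NormedAddCommGroup X]
    [NormedSpace ℝ X] [CompleteSpace X] (Ω : Set X)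
    (hopen : IsOpen Ω) (hconn : IsConnected Ω) (hproper : Ω ≠ univ)
    (x₀ : X) (hx₀ : x₀ ∈ Ω) (hstar : StarConvex ℝ x₀ Ω) (r : ℝ) (hr : 0 < r) :
    StarConvex ℝ x₀ (jBall Ω x₀ r) ∧ StarConvex ℝ x₀ (qhBall Ω x₀ r) := by
  have hne := aux_frontier_ne hproper hx₀
  have key : ∀ (y : X) (a b : ℝ), a + b = 1 → a • x₀ + b • y = x₀ + b • (y - x₀) := by
    intro y a b hab
    have : a = 1 - b := by linarith
    rw [this, sub_smul, one_smul, smul_sub]; abel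
  constructor
  · rintro y ⟨hy, hj⟩ a b ha hb hab
    have hb1 : b ≤ 1 := by linarith
    rw [key y a b hab]
    have hz := aux_star hstar hy hb hb1
    refine ⟨hz, lt_of_le_of_lt ?_ hj⟩
    unfold jDist
    have p0 := aux_pos hopen hne hx₀
    have py := aux_pos hopen hne hy
    have pz := aux_pos hopen hne hz
    have hsc := aux_scale hopen hne hstar hy hb hb1
    have hm1 := lt_min p0 py
    have hm2 := lt_min p0 pz
    have hd : dist x₀ (x₀ + b • (y - x₀)) = b * dist x₀ y := by
      rw [dist_self_add_right, norm_smul, Real.norm_of_nonneg hb, dist_comm, dist_eq_norm]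
    apply Real.log_le_log
    · positivity
    rw [hd]
    gcongr 1 + ?_
    rw [div_le_div_iff₀ hm2 hm1]
    have h3 : b * min (infDist x₀ (frontier Ω)) (infDist y (frontier Ω)) ≤
        min (infDist x₀ (frontier Ω)) (infDist (x₀ + b • (y - x₀)) (frontier Ω)) := by
      refine le_min ?_ ?_
      · exact (mul_le_of_le_one_left hm1.le hb1).trans (min_le_left _ _)
      · exact (mul_le_mul_of_nonneg_left (min_le_right _ _) hb).trans hsc
    have := mul_le_mul_of_nonneg_left h3 (dist_nonneg (x := x₀) (y := y))
    linarith
  · rintro y ⟨hy, hk⟩ a b ha hb hab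
    have hb1 : b ≤ 1 := by linarith
    rw [key y a b hab]
    refine ⟨aux_star hstar hy hb hb1, ?_⟩
    obtain ⟨_, ⟨γ, hγ, rfl⟩, hlt⟩ :=
      exists_lt_of_csInf_lt (⟨_, ⟨_, aux_segment hstar hy, rfl⟩⟩ :
        (qhLength Ω '' {γ | IsRectPath Ω x₀ y γ}).Nonempty) hk
    refine lt_of_le_of_lt (csInf_le (aux_bdd _ _) ⟨_, aux_path hstar hγ hb hb1, rfl⟩) ?_
    exact lt_of_le_of_lt (aux_length hopen hne hstar hγ hb hb1) hlt
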